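/- arXiv:2409.05290 — 2 statements merged into one kernel-verified Lean document; each statement's English description precedes it below -/
import Mathlib

section
/- Let S : ℝⁿ × ℝᵐ → ℝ be convex-concave, continuously differentiable, and possess at least one saddle point, and let ρ > 0. Then every trajectory of the augmented saddle flow dynamics x'(t) = −∇ₓS(x(t),y(t)) − ρ(x(t) − x̂(t)), x̂'(t) = ρ(x(t) − x̂(t)), y'(t) = +∇_yS(x(t),y(t)) − ρ(y(t) − ŷ(t)), ŷ'(t) = ρ(y(t) − ŷ(t)) converges as t → ∞ to a point (x∞, x̂∞, y∞, ŷ∞) with x̂∞ = x∞ and ŷ∞ = y∞ such that (x∞, y∞) is a saddle point of S. -/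
open Set Filter Topology

/-!
The proof rewrites the dynamics in `z = (x, y)` with the saddle operator `F = (∇ₓS, -∇_yS)`:
`z' = -F(z) - ρ(z - ẑ)`, `ẑ' = ρ(z - ẑ)`. Convexity-concavity enters only through two facts: the
zeros of the continuous map `F` are exactly the saddle points of `S`, and
`⟪F z, z - p⟫ ≥ 0` for every zero `p` (the first-order inequalities give
`⟪F z, z - p⟫ ≥ S(x, y_p) - S(x_p, y) ≥ 0`).

For a zero `p`, the function `V_p = ‖z - p‖² + ‖ẑ - p‖²` satisfies
`V_p' = -2⟪F z, z - p⟫ - 2ρ‖z - ẑ‖² ≤ 0`. Hence the trajectory is bounded, so it is Lipschitz in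
time, and every continuous function of it is uniformly continuous in time. Barbalat's lemma
(`tendsto_zero_of_uniformContinuousOn_deriv`) then applies twice: to `V_p`, giving `z - ẑ → 0`, and
to `z - ẑ`, whose derivative is `-F(z) - 2ρ(z - ẑ)`, giving `F(z) → 0`. A second use of Barbalat's
lemma replaces an invariance argument, which would need uniqueness for the ODE although `F` is
merely continuous. Consequently every cluster point `q` of `z` is a zero of `F`; the monotone
function `V_q` tends to `0` along a subsequence, hence tends to `0`, and the whole trajectory
converges to `(q, q)`.
-/

/-! ### Barbalat's lemma -/

/-- Barbalat's lemma: if `f` converges at infinity and its derivative is uniformly continuous, then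
the derivative tends to `0`. -/
theorem tendsto_zero_of_uniformContinuousOn_deriv {E : Type*} [NormedAddCommGroup E]
    [NormedSpace ℝ E] {f f' : ℝ → E} {l : E} (hf : ∀ t, 0 ≤ t → HasDerivAt f (f' t) t)
    (hu : UniformContinuousOn f' (Ici 0)) (hl : Tendsto f atTop (𝓝 l)) :
    Tendsto f' atTop (𝓝 0) := by
  rw [Metric.tendsto_nhds]
  intro ε hε
  obtain ⟨δ, hδ, hd⟩ := Metric.uniformContinuousOn_iff.1 hu (ε / 2) (by positivity)
  -- On `[t, t + η]` the derivative stays within `ε / 2` of `f' t`.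
  set η := δ / 2 with hη
  have hηpos : 0 < η := by positivity
  have h1 : Tendsto (fun t => ‖f (t + η) - f t‖) atTop (𝓝 0) := by
    have := ((hl.comp (tendsto_atTop_add_const_right atTop η tendsto_id)).sub hl).norm
    simpa using this
  filter_upwards [eventually_ge_atTop 0, h1.eventually_lt_const (show 0 < η * (ε / 2) by positivity)]
    with t ht hlt
  have key := norm_image_sub_le_of_norm_deriv_le_segment' (a := t) (b := t + η)
    (f := fun s => f s - (s - t) • f' t) (f' := fun s => f' s - f' t) (C := ε / 2)
    (fun s hs => by
      have h2 := (hf s (ht.trans hs.1)).sub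
        (((hasDerivAt_id s).sub_const t).smul_const (f' t))
      simpa [Pi.sub_def] using h2.hasDerivWithinAt)
    (fun s hs => by
      have := hd s (ht.trans hs.1) t ht (by
        rw [Real.dist_eq, abs_of_nonneg (by linarith [hs.1])]; linarith [hs.2])
      rw [dist_eq_norm] at this
      exact this.le) (t + η) (by constructor <;> linarith)
  have h3 : ‖η • f' t‖ ≤ ‖f (t + η) - f t‖ + ε / 2 * η := by
    calc ‖η • f' t‖ = ‖(f (t + η) - f t) - (f (t + η) - f t - η • f' t)‖ := by congr 1; abel
      _ ≤ ‖f (t + η) - f t‖ + ‖f (t + η) - f t - η • f' t‖ := norm_sub_le _ _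
      _ ≤ _ := by
        gcongr
        have e : f (t + η) - f t - η • f' t =
            f (t + η) - (t + η - t) • f' t - (f t - (t - t) • f' t) := by
          simp only [add_sub_cancel_left, sub_self, zero_smul, sub_zero]; abel
        rw [e]
        simpa using key
  rw [norm_smul, Real.norm_of_nonneg hηpos.le] at h3
  rw [dist_zero_right]
  nlinarith

/-! ### Augmented flow of an operator on an inner product space -/

section Flow

open scoped RealInnerProductSpace

variable {E : Type*} [NormedAddCommGroup E] [InnerProductSpace ℝ E]
  {F : E → E} {ρ : ℝ} {z zh : ℝ → E}

/-- Derivative of the Lyapunov function `‖z - p‖² + ‖ẑ - p‖²` along the flow. -/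
theorem hasDerivAt_lyapunov {t : ℝ} (hz : HasDerivAt z (-F (z t) - ρ • (z t - zh t)) t)
    (hzh : HasDerivAt zh (ρ • (z t - zh t)) t) (p : E) :
    HasDerivAt (fun s => ‖z s - p‖ ^ 2 + ‖zh s - p‖ ^ 2)
      (-2 * ⟪F (z t), z t - p⟫ - 2 * ρ * ‖z t - zh t‖ ^ 2) t := by
  refine ((hz.sub_const p).norm_sq.add (hzh.sub_const p).norm_sq).congr_deriv ?_
  have e : ‖z t - zh t‖ ^ 2 = ⟪z t - p, z t - zh t⟫ - ⟪zh t - p, z t - zh t⟫ := by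
    rw [← inner_sub_left, sub_sub_sub_cancel_right, real_inner_self_eq_norm_sq]
  rw [e, inner_sub_right (𝕜 := ℝ) (z t - p) (-F (z t)), inner_neg_right, inner_smul_right,
    inner_smul_right, real_inner_comm (F (z t))]
  ring

theorem antitoneOn_lyapunov (hρ : 0 < ρ)
    (hz : ∀ t, 0 ≤ t → HasDerivAt z (-F (z t) - ρ • (z t - zh t)) t)
    (hzh : ∀ t, 0 ≤ t → HasDerivAt zh (ρ • (z t - zh t)) t) {p : E}
    (hp : ∀ q, 0 ≤ ⟪F q, q - p⟫) :
    AntitoneOn (fun s => ‖z s - p‖ ^ 2 + ‖zh s - p‖ ^ 2) (Ici 0) := by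
  have hd := fun t ht => hasDerivAt_lyapunov (hz t ht) (hzh t ht) p
  refine antitoneOn_of_deriv_nonpos (convex_Ici 0)
    (fun t ht => (hd t ht).continuousAt.continuousWithinAt)
    (fun t ht => (hd t (interior_subset ht)).differentiableAt.differentiableWithinAt)
    (fun t ht => ?_)
  rw [(hd t (interior_subset ht)).deriv]
  have := hp (z t)
  have : 0 ≤ ρ * ‖z t - zh t‖ ^ 2 := by positivity
  linarith

theorem exists_tendsto_lyapunov (hρ : 0 < ρ)
    (hz : ∀ t, 0 ≤ t → HasDerivAt z (-F (z t) - ρ • (z t - zh t)) t)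
    (hzh : ∀ t, 0 ≤ t → HasDerivAt zh (ρ • (z t - zh t)) t) {p : E}
    (hp : ∀ q, 0 ≤ ⟪F q, q - p⟫) :
    ∃ l, Tendsto (fun s => ‖z s - p‖ ^ 2 + ‖zh s - p‖ ^ 2) atTop (𝓝 l) := by
  have ha := antitoneOn_lyapunov hρ hz hzh hp
  set V := fun s => ‖z s - p‖ ^ 2 + ‖zh s - p‖ ^ 2 with hV
  have h1 : Antitone (fun t => V (max t 0)) := fun s t hst =>
    ha (mem_Ici.2 (le_max_right _ _)) (mem_Ici.2 (le_max_right _ _)) (max_le_max_right _ hst)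
  have h2 : BddBelow (range fun t => V (max t 0)) :=
    ⟨0, by rintro _ ⟨t, rfl⟩; simp only [hV]; positivity⟩
  refine ⟨_, (tendsto_atTop_ciInf h1 h2).congr' ?_⟩
  filter_upwards [eventually_ge_atTop 0] with t ht
  rw [max_eq_left ht]

theorem exists_isCompact_flow_mem [ProperSpace E] (hρ : 0 < ρ)
    (hz : ∀ t, 0 ≤ t → HasDerivAt z (-F (z t) - ρ • (z t - zh t)) t)
    (hzh : ∀ t, 0 ≤ t → HasDerivAt zh (ρ • (z t - zh t)) t) {p : E}
    (hp : ∀ q, 0 ≤ ⟪F q, q - p⟫) :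
    ∃ K : Set (E × E), IsCompact K ∧ ∀ t, 0 ≤ t → (z t, zh t) ∈ K := by
  have ha := antitoneOn_lyapunov hρ hz hzh hp
  set R := √(‖z 0 - p‖ ^ 2 + ‖zh 0 - p‖ ^ 2) with hR
  refine ⟨Metric.closedBall p R ×ˢ Metric.closedBall p R,
    (isCompact_closedBall p R).prod (isCompact_closedBall p R), fun t ht => ?_⟩
  have := ha self_mem_Ici ht ht
  simp only at this
  constructor
  · rw [Metric.mem_closedBall, dist_eq_norm]
    exact Real.le_sqrt_of_sq_le (by nlinarith [sq_nonneg ‖zh t - p‖])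
  · rw [Metric.mem_closedBall, dist_eq_norm]
    exact Real.le_sqrt_of_sq_le (by nlinarith [sq_nonneg ‖z t - p‖])

/-- Continuous functions of the state are uniformly continuous in time along a bounded trajectory,
because such a trajectory is Lipschitz. -/
theorem uniformContinuousOn_comp_flow (hF : Continuous F)
    (hz : ∀ t, 0 ≤ t → HasDerivAt z (-F (z t) - ρ • (z t - zh t)) t)
    (hzh : ∀ t, 0 ≤ t → HasDerivAt zh (ρ • (z t - zh t)) t) {K : Set (E × E)} (hK : IsCompact K)
    (hmem : ∀ t, 0 ≤ t → (z t, zh t) ∈ K) {G : Type*} [NormedAddCommGroup G] {g : E × E → G}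
    (hg : Continuous g) : UniformContinuousOn (fun t => g (z t, zh t)) (Ici 0) := by
  have hcont : Continuous (fun q : E × E => (-F q.1 - ρ • (q.1 - q.2), ρ • (q.1 - q.2))) := by
    fun_prop
  obtain ⟨C, hC⟩ := hK.exists_bound_of_continuousOn hcont.continuousOn
  have hlip : LipschitzOnWith C.toNNReal (fun t => (z t, zh t)) (Ici 0) :=
    (convex_Ici 0).lipschitzOnWith_of_nnnorm_hasDerivWithin_le
      (fun t ht => ((hz t ht).prodMk (hzh t ht)).hasDerivWithinAt)
      (fun t ht => by
        rw [← norm_toNNReal]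
        exact Real.toNNReal_le_toNNReal (hC _ (hmem t ht)))
  exact (hK.uniformContinuousOn_of_continuous hg.continuousOn).comp hlip.uniformContinuousOn
    (fun t ht => hmem t ht)

/-- Convergence of the augmented flow for a continuous operator `F` that is monotone with respect
to its zeros. -/
theorem exists_tendsto_flow [ProperSpace E] (hρ : 0 < ρ) (hF : Continuous F)
    (hmono : ∀ p, F p = 0 → ∀ q, 0 ≤ ⟪F q, q - p⟫) (hex : ∃ p, F p = 0)
    (hz : ∀ t, 0 ≤ t → HasDerivAt z (-F (z t) - ρ • (z t - zh t)) t)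
    (hzh : ∀ t, 0 ≤ t → HasDerivAt zh (ρ • (z t - zh t)) t) :
    ∃ q, F q = 0 ∧ Tendsto z atTop (𝓝 q) ∧ Tendsto zh atTop (𝓝 q) := by
  obtain ⟨p, hp0⟩ := hex
  have hp := hmono p hp0
  obtain ⟨l, hl⟩ := exists_tendsto_lyapunov hρ hz hzh hp
  obtain ⟨K, hK, hzK⟩ := exists_isCompact_flow_mem hρ hz hzh hp
  have hV := tendsto_zero_of_uniformContinuousOn_deriv
    (fun t ht => hasDerivAt_lyapunov (hz t ht) (hzh t ht) p)
    (uniformContinuousOn_comp_flow hF hz hzh hK hzK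
      (g := fun q => -2 * ⟪F q.1, q.1 - p⟫ - 2 * ρ * ‖q.1 - q.2‖ ^ 2) (by fun_prop)) hl
  have hw : Tendsto (fun t => z t - zh t) atTop (𝓝 0) := by
    have h1 : Tendsto (fun t => ‖z t - zh t‖ ^ 2) atTop (𝓝 0) := by
      refine squeeze_zero (fun t => by positivity) (fun t => ?_)
        (by simpa only [neg_zero, zero_div] using hV.neg.div_const (2 * ρ))
      rw [le_div_iff₀ (by positivity)]
      linarith [hp (z t)]
    rw [tendsto_zero_iff_norm_tendsto_zero]
    simpa using h1.sqrt
  have hw' := tendsto_zero_of_uniformContinuousOn_deriv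
    (fun t ht => (hz t ht).sub (hzh t ht))
    (uniformContinuousOn_comp_flow hF hz hzh hK hzK
      (g := fun q => -F q.1 - ρ • (q.1 - q.2) - ρ • (q.1 - q.2)) (by fun_prop)) hw
  have hFz : Tendsto (fun t => F (z t)) atTop (𝓝 0) := by
    have h1 := (hw'.add (hw.const_smul (2 * ρ))).neg
    simp only [smul_zero, add_zero, neg_zero] at h1
    refine h1.congr fun t => ?_
    rw [two_mul, add_smul]
    abel
  obtain ⟨⟨q, q'⟩, -, φ, hφ, hqq⟩ := hK.tendsto_subseq (x := fun k : ℕ => (z k, zh k))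
    (fun k => hzK k (Nat.cast_nonneg k))
  have hq : Tendsto (fun k => z (φ k)) atTop (𝓝 q) := hqq.fst_nhds
  have hφt : Tendsto (fun k => (φ k : ℝ)) atTop atTop :=
    tendsto_natCast_atTop_atTop.comp hφ.tendsto_atTop
  have hq0 : F q = 0 :=
    tendsto_nhds_unique ((hF.tendsto q).comp hq) (hFz.comp hφt)
  obtain ⟨l', hl'⟩ := exists_tendsto_lyapunov hρ hz hzh (hmono q hq0)
  have hqh : Tendsto (fun k => zh (φ k)) atTop (𝓝 q) := by
    have := hq.sub (hw.comp hφt)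
    simpa [Function.comp_def] using this
  have hsub : Tendsto (fun k => ‖z (φ k) - q‖ ^ 2 + ‖zh (φ k) - q‖ ^ 2) atTop (𝓝 0) := by
    have := ((hq.sub_const q).norm.pow 2).add ((hqh.sub_const q).norm.pow 2)
    simpa [Function.comp_def] using this
  obtain rfl : l' = 0 := tendsto_nhds_unique (hl'.comp hφt) hsub
  have hzq : Tendsto z atTop (𝓝 q) := by
    rw [tendsto_iff_norm_sub_tendsto_zero]
    have h1 : Tendsto (fun t => ‖z t - q‖ ^ 2) atTop (𝓝 0) :=
      squeeze_zero (fun t => by positivity)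
        (fun t => le_add_of_nonneg_right (by positivity)) hl'
    simpa using h1.sqrt
  refine ⟨q, hq0, hzq, ?_⟩
  simpa using hzq.sub hw

end Flow

/-! ### First-order conditions for convex and concave functions -/

section Gradient

open scoped RealInnerProductSpace

variable {E : Type*} [NormedAddCommGroup E] [InnerProductSpace ℝ E] [CompleteSpace E]
  {f : E → ℝ}

/-- First-order inequality: a convex function lies above its tangent hyperplanes. -/
theorem ConvexOn.add_inner_gradient_le (hf : ConvexOn ℝ univ f) {a : E}
    (hd : DifferentiableAt ℝ f a) (b : E) : f a + ⟪gradient f a, b - a⟫ ≤ f b := by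
  have h1 : ConvexOn ℝ univ (f ∘ AffineMap.lineMap (k := ℝ) a b) :=
    hf.comp_affineMap (AffineMap.lineMap a b)
  have hline : HasDerivAt (AffineMap.lineMap (k := ℝ) a b) (b - a) (0 : ℝ) :=
    AffineMap.hasDerivAt_lineMap
  have h2 : HasDerivAt (f ∘ AffineMap.lineMap (k := ℝ) a b) ⟪gradient f a, b - a⟫ (0 : ℝ) := by
    have h3 := hd.hasGradientAt.hasFDerivAt
    rw [← AffineMap.lineMap_apply_zero (k := ℝ) a b] at h3
    have := h3.comp_hasDerivAt (0 : ℝ) hline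
    simpa using this
  have h4 := h1.le_slope_of_hasDerivAt (mem_univ 0) (mem_univ 1) zero_lt_one h2
  simp only [slope_def_field, Function.comp_apply, AffineMap.lineMap_apply_one,
    AffineMap.lineMap_apply_zero, sub_zero, div_one] at h4
  linarith

theorem ConcaveOn.le_add_inner_gradient (hf : ConcaveOn ℝ univ f) {a : E}
    (hd : DifferentiableAt ℝ f a) (b : E) : f b ≤ f a + ⟪gradient f a, b - a⟫ := by
  have h1 := hf.neg.add_inner_gradient_le hd.neg b
  have h2 : gradient (-f) a = -gradient f a := by
    simp [gradient, fderiv_neg]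
  rw [h2, inner_neg_left] at h1
  simp only [Pi.neg_apply] at h1
  linarith

theorem IsLocalExtr.gradient_eq_zero {a : E} (h : IsLocalExtr f a) : gradient f a = 0 := by
  simp [gradient, h.fderiv_eq_zero]

end Gradient

/-! ### The saddle operator -/

section Saddle

open scoped RealInnerProductSpace

variable {X Y : Type*} [NormedAddCommGroup X] [InnerProductSpace ℝ X]
  [NormedAddCommGroup Y] [InnerProductSpace ℝ Y] {S : X → Y → ℝ}

theorem differentiable_left (hS : ContDiff ℝ 1 (fun p : X × Y => S p.1 p.2)) (y : Y) :
    Differentiable ℝ (fun x => S x y) :=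
  (hS.differentiable one_ne_zero).comp (differentiable_id.prodMk (differentiable_const y))

theorem differentiable_right (hS : ContDiff ℝ 1 (fun p : X × Y => S p.1 p.2)) (x : X) :
    Differentiable ℝ (fun y => S x y) :=
  (hS.differentiable one_ne_zero).comp ((differentiable_const x).prodMk differentiable_id)

theorem HasDerivAt.toLp_prodMk {u : ℝ → X} {v : ℝ → Y} {u' : X} {v' : Y} {t : ℝ}
    (hu : HasDerivAt u u' t) (hv : HasDerivAt v v' t) :
    HasDerivAt (fun s => WithLp.toLp 2 (u s, v s)) (WithLp.toLp 2 (u', v')) t :=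
  (WithLp.prodContinuousLinearEquiv 2 ℝ X Y).symm.hasFDerivAt.comp_hasDerivAt t (hu.prodMk hv)

variable [CompleteSpace X] [CompleteSpace Y]

/-- The saddle operator `(x, y) ↦ (∇ₓS, -∇_yS)`, on the `L²` product so that the product carries
the Euclidean inner product. -/
noncomputable def saddleOp (S : X → Y → ℝ) (p : WithLp 2 (X × Y)) : WithLp 2 (X × Y) :=
  WithLp.toLp 2 (gradient (fun x => S x p.snd) p.fst, -gradient (fun y => S p.fst y) p.snd)

theorem continuous_saddleOp (hS : ContDiff ℝ 1 (fun p : X × Y => S p.1 p.2)) :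
    Continuous (saddleOp S) := by
  have hd := hS.differentiable one_ne_zero
  have hc := hS.continuous_fderiv one_ne_zero
  have h1 : ∀ x y, fderiv ℝ (fun x' => S x' y) x =
      (fderiv ℝ (fun p : X × Y => S p.1 p.2) (x, y)).comp (ContinuousLinearMap.inl ℝ X Y) :=
    fun x y => (HasFDerivAt.comp (f := fun x' => (x', y)) x
      (hd (x, y)).hasFDerivAt (hasFDerivAt_prodMk_left x y)).fderiv
  have h2 : ∀ x y, fderiv ℝ (fun y' => S x y') y =
      (fderiv ℝ (fun p : X × Y => S p.1 p.2) (x, y)).comp (ContinuousLinearMap.inr ℝ X Y) :=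
    fun x y => (HasFDerivAt.comp (f := fun y' => (x, y')) y
      (hd (x, y)).hasFDerivAt (hasFDerivAt_prodMk_right x y)).fderiv
  unfold saddleOp gradient
  simp only [h1, h2]
  have hc' : Continuous fun p : WithLp 2 (X × Y) =>
      fderiv ℝ (fun p : X × Y => S p.1 p.2) (p.fst, p.snd) :=
    hc.comp (WithLp.prod_continuous_ofLp 2 X Y)
  refine (WithLp.prod_continuous_toLp 2 X Y).comp (Continuous.prodMk ?_ ?_)
  · exact (InnerProductSpace.toDual ℝ X).symm.continuous.comp (hc'.clm_comp continuous_const)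
  · exact ((InnerProductSpace.toDual ℝ Y).symm.continuous.comp
      (hc'.clm_comp continuous_const)).neg

theorem saddleOp_eq_zero_iff (hconv : ∀ y, ConvexOn ℝ univ (fun x => S x y))
    (hconc : ∀ x, ConcaveOn ℝ univ (fun y => S x y))
    (hS : ContDiff ℝ 1 (fun p : X × Y => S p.1 p.2)) (p : WithLp 2 (X × Y)) :
    saddleOp S p = 0 ↔ ∀ x y, S p.fst y ≤ S p.fst p.snd ∧ S p.fst p.snd ≤ S x p.snd := by
  constructor
  · intro h x y
    have h1 : gradient (fun x => S x p.snd) p.fst = 0 := congrArg WithLp.fst h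
    have h2 : -gradient (fun y => S p.fst y) p.snd = 0 := congrArg WithLp.snd h
    rw [neg_eq_zero] at h2
    have h3 := (hconv p.snd).add_inner_gradient_le (differentiable_left hS p.snd p.fst) x
    have h4 := (hconc p.fst).le_add_inner_gradient (differentiable_right hS p.fst p.snd) y
    rw [h1, inner_zero_left, add_zero] at h3
    rw [h2, inner_zero_left, add_zero] at h4
    exact ⟨h4, h3⟩
  · intro h
    have h1 : gradient (fun x => S x p.snd) p.fst = 0 :=
      IsLocalExtr.gradient_eq_zero (.inl (.of_forall fun x => (h x p.snd).2))
    have h2 : gradient (fun y => S p.fst y) p.snd = 0 :=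
      IsLocalExtr.gradient_eq_zero (.inr (.of_forall fun y => (h p.fst y).1))
    simp [saddleOp, h1, h2]

/-- Monotonicity of the saddle operator relative to a zero `p`: the first-order inequalities at `q`
bound the inner product below by `S(x_q, y_p) - S(x_p, y_q)`, which is nonnegative because `p` is a
saddle point. -/
theorem saddleOp_inner_nonneg (hconv : ∀ y, ConvexOn ℝ univ (fun x => S x y))
    (hconc : ∀ x, ConcaveOn ℝ univ (fun y => S x y))
    (hS : ContDiff ℝ 1 (fun p : X × Y => S p.1 p.2)) {p : WithLp 2 (X × Y)}
    (hp : saddleOp S p = 0) (q : WithLp 2 (X × Y)) : 0 ≤ ⟪saddleOp S q, q - p⟫ := by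
  obtain ⟨h1, h2⟩ := (saddleOp_eq_zero_iff hconv hconc hS p).1 hp q.fst q.snd
  have h3 := (hconv q.snd).add_inner_gradient_le (differentiable_left hS q.snd q.fst) p.fst
  have h4 := (hconc q.fst).le_add_inner_gradient (differentiable_right hS q.fst q.snd) p.snd
  have e : ⟪saddleOp S q, q - p⟫ = -⟪gradient (fun x => S x q.snd) q.fst, p.fst - q.fst⟫ +
      ⟪gradient (fun y => S q.fst y) q.snd, p.snd - q.snd⟫ := by
    rw [WithLp.prod_inner_apply, ← neg_sub q.fst, ← neg_sub q.snd, inner_neg_right,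
      inner_neg_right, neg_neg, ← inner_neg_left]
    rfl
  rw [e]
  linarith

end Saddle

/-! ### Convergence of the augmented saddle flow -/

/-- For a convex-concave, continuously differentiable `S` with at least one
saddle point and `ρ > 0`, every trajectory of the augmented saddle flow dynamics
converges to a point `(x∞, x̂∞, y∞, ŷ∞)` with `x̂∞ = x∞`, `ŷ∞ = y∞`, and `(x∞, y∞)`
a saddle point of `S`. -/
theorem augmented_saddle_flow_convergence {n m : ℕ}
    (S : EuclideanSpace ℝ (Fin n) → EuclideanSpace ℝ (Fin m) → ℝ)
    (ρ : ℝ) (hρ : 0 < ρ)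
    (hconv : ∀ y, ConvexOn ℝ univ (fun x => S x y))
    (hconc : ∀ x, ConcaveOn ℝ univ (fun y => S x y))
    (hC1 : ContDiff ℝ 1
      (fun p : EuclideanSpace ℝ (Fin n) × EuclideanSpace ℝ (Fin m) => S p.1 p.2))
    (hexists : ∃ (x₀ : EuclideanSpace ℝ (Fin n)) (y₀ : EuclideanSpace ℝ (Fin m)),
      ∀ x y, S x₀ y ≤ S x₀ y₀ ∧ S x₀ y₀ ≤ S x y₀)
    (x xh : ℝ → EuclideanSpace ℝ (Fin n)) (y yh : ℝ → EuclideanSpace ℝ (Fin m))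
    (hx : ∀ t, 0 ≤ t → HasDerivAt x
      (-(gradient (fun x' => S x' (y t)) (x t)) - ρ • (x t - xh t)) t)
    (hxh : ∀ t, 0 ≤ t → HasDerivAt xh (ρ • (x t - xh t)) t)
    (hy : ∀ t, 0 ≤ t → HasDerivAt y
      (gradient (fun y' => S (x t) y') (y t) - ρ • (y t - yh t)) t)
    (hyh : ∀ t, 0 ≤ t → HasDerivAt yh (ρ • (y t - yh t)) t) :
    ∃ (xe : EuclideanSpace ℝ (Fin n)) (ye : EuclideanSpace ℝ (Fin m)),
      (∀ x' y', S xe y' ≤ S xe ye ∧ S xe ye ≤ S x' ye) ∧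
      Tendsto (fun t => (x t, xh t, y t, yh t)) atTop (𝓝 (xe, xe, ye, ye)) := by
  have hzero := saddleOp_eq_zero_iff hconv hconc hC1
  obtain ⟨x₀, y₀, h₀⟩ := hexists
  obtain ⟨q, hq, hz, hzh⟩ := exists_tendsto_flow hρ (continuous_saddleOp hC1)
    (fun p hp q => saddleOp_inner_nonneg hconv hconc hC1 hp q)
    ⟨WithLp.toLp 2 (x₀, y₀), (hzero _).2 h₀⟩
    (z := fun t => WithLp.toLp 2 (x t, y t)) (zh := fun t => WithLp.toLp 2 (xh t, yh t))
    (fun t ht => by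
      refine ((hx t ht).toLp_prodMk (hy t ht)).congr_deriv (WithLp.ofLp_injective 2 (Prod.ext rfl ?_))
      simp [saddleOp])
    (fun t ht => (hxh t ht).toLp_prodMk (hyh t ht))
  have hc := WithLp.prod_continuous_ofLp 2 (EuclideanSpace ℝ (Fin n)) (EuclideanSpace ℝ (Fin m))
  have h1 := (hc.tendsto q).comp hz
  have h2 := (hc.tendsto q).comp hzh
  exact ⟨q.fst, q.snd, (hzero q).1 hq, h1.fst_nhds.prodMk_nhds
    (h2.fst_nhds.prodMk_nhds (h1.snd_nhds.prodMk_nhds h2.snd_nhds))⟩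
end

section
/- Let X ⊆ ℝⁿ and Y ⊆ ℝᵐ be nonempty closed convex sets, let S : ℝⁿ × ℝᵐ → ℝ be differentiable, μ-strongly convex in x and q-strongly concave in y (μ, q > 0), and let z* = (x*, y*) ∈ X × Y be a saddle point of S on X × Y. Let x : [0,∞) → X and y : [0,∞) → Y be differentiable curves such that for each t ≥ 0, x'(t) equals the limit as δ → 0⁺ of (Ψ_X(x(t) + δ·(−∇ₓS(x(t), y(t)))) − x(t))/δ and y'(t) equals the limit as δ → 0⁺ of (Ψ_Y(y(t) + δ·∇_yS(x(t), y(t))) − y(t))/δ, where Ψ_X, Ψ_Y are the metric projections onto X, Y. Then ‖(x(t), y(t)) − (x*, y*)‖ ≤ ‖(x(0), y(0)) − (x*, y*)‖ · e^{−ct} for all t ≥ 0, with c = min{μ, q} > 0. -/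
/-!
Let `V t = ‖x t - xs‖ ^ 2 + ‖y t - ys‖ ^ 2`. Projecting a velocity `g` at a point of a closed convex
set can only turn it further towards any other point of the set
(`inner_le_of_tendsto_projection`), so `V'` is bounded above by what the unprojected gradient flow
would give. The gradient inequality of strong convexity (`strongConvex_gradient_le`) at
`(x t, y t)`, together with quadratic growth of `S` away from its saddle point
(`strongConvex_growth_of_isMin`), then gives `V' ≤ -2 * min μ q * V`; the mixed values `S (x t) (y t)`
cancel. Hence `V t * exp (2 * min μ q * t)` is nonincreasing, and taking square roots gives the claim.
-/

open Set Filter Topology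

section Helpers

variable {E : Type*} [NormedAddCommGroup E] [InnerProductSpace ℝ E]

/-- Strong convexity bounds every difference quotient from `a` towards `b`. -/
lemma strongConvex_slope_le {f : E → ℝ} {m : ℝ}
    (hf : ConvexOn ℝ univ (fun x => f x - m / 2 * ‖x‖ ^ 2)) (a b : E) {t : ℝ}
    (h0 : 0 < t) (h1 : t < 1) :
    t⁻¹ * (f (a + t • (b - a)) - f a) ≤ f b - f a - (1 - t) * (m / 2 * ‖b - a‖ ^ 2) := by
  have h := (strongConvexOn_iff_convex.2 hf).2 (mem_univ a) (mem_univ b)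
    (sub_nonneg.2 h1.le) h0.le (by ring)
  have e : (1 - t) • a + t • b = a + t • (b - a) := by module
  rw [e, norm_sub_rev] at h
  simp only [smul_eq_mul] at h
  rw [inv_mul_le_iff₀ h0]
  linarith

lemma strongConvex_gradient_le [CompleteSpace E] {f : E → ℝ} {m : ℝ}
    (hf : ConvexOn ℝ univ (fun x => f x - m / 2 * ‖x‖ ^ 2)) {a : E} (b : E)
    (hd : DifferentiableAt ℝ f a) :
    inner ℝ (gradient f a) (b - a) + m / 2 * ‖b - a‖ ^ 2 ≤ f b - f a := by
  have hl : HasDerivAt (fun t : ℝ => f (a + t • (b - a))) (inner ℝ (gradient f a) (b - a)) 0 := by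
    have h1 : HasDerivAt (fun t : ℝ => a + t • (b - a)) (b - a) 0 := by
      simpa using ((hasDerivAt_id (0 : ℝ)).smul_const (b - a)).const_add a
    have h2 := hd.hasGradientAt.hasFDerivAt
    have h3 : HasFDerivAt f (InnerProductSpace.toDual ℝ E (gradient f a))
        ((fun t : ℝ => a + t • (b - a)) 0) := by simpa using h2
    exact h3.comp_hasDerivAt (0 : ℝ) h1
  have hs := hl.tendsto_slope_zero_right
  have hr : Tendsto (fun t : ℝ => f b - f a - (1 - t) * (m / 2 * ‖b - a‖ ^ 2)) (𝓝[>] 0)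
      (𝓝 (f b - f a - (1 - 0) * (m / 2 * ‖b - a‖ ^ 2))) :=
    (Continuous.tendsto (by fun_prop) 0).mono_left nhdsWithin_le_nhds
  have := le_of_tendsto_of_tendsto hs hr (by
    filter_upwards [Ioo_mem_nhdsGT (zero_lt_one' ℝ)] with t ht
    simpa using strongConvex_slope_le hf a b ht.1 ht.2)
  linarith

/-- Quadratic growth at a constrained minimiser of a strongly convex function. -/
lemma strongConvex_growth_of_isMin {f : E → ℝ} {m : ℝ}
    (hf : ConvexOn ℝ univ (fun x => f x - m / 2 * ‖x‖ ^ 2)) {P : Set E} (hP : Convex ℝ P)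
    {a b : E} (ha : a ∈ P) (hb : b ∈ P) (hmin : ∀ z ∈ P, f a ≤ f z) :
    m / 2 * ‖b - a‖ ^ 2 ≤ f b - f a := by
  have hr : Tendsto (fun t : ℝ => f b - f a - (1 - t) * (m / 2 * ‖b - a‖ ^ 2)) (𝓝[>] 0)
      (𝓝 (f b - f a - (1 - 0) * (m / 2 * ‖b - a‖ ^ 2))) :=
    (Continuous.tendsto (by fun_prop) 0).mono_left nhdsWithin_le_nhds
  have := ge_of_tendsto hr (b := 0) (by
    filter_upwards [Ioo_mem_nhdsGT (zero_lt_one' ℝ)] with t ht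
    refine le_trans ?_ (strongConvex_slope_le hf a b ht.1 ht.2)
    have := hmin _ (hP.add_smul_sub_mem ha hb ⟨ht.1.le, ht.2.le⟩)
    exact mul_nonneg (inv_nonneg.2 ht.1.le) (sub_nonneg.2 this))
  linarith

/-- The variational inequality of a nearest point `p` of `P` to `r`. -/
lemma inner_le_zero_of_nearest {P : Set E} (hP : Convex ℝ P) {p r w : E}
    (hp : p ∈ P) (hw : w ∈ P) (hn : ∀ z ∈ P, ‖p - r‖ ≤ ‖z - r‖) :
    inner ℝ (r - p) (w - p) ≤ 0 := by
  refine (norm_eq_iInf_iff_real_inner_le_zero hP hp).1 ?_ w hw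
  have : Nonempty P := ⟨⟨p, hp⟩⟩
  refine le_antisymm (le_ciInf fun z => ?_) ?_
  · simpa only [norm_sub_rev] using hn z z.2
  · exact ciInf_le (f := fun z : P => ‖r - z‖) ⟨0, by rintro _ ⟨z, rfl⟩; positivity⟩ ⟨p, hp⟩

/-- The projected velocity `v` of `g` at `a` moves away from a point `w` of the set no faster
than `g` itself. -/
lemma inner_le_of_tendsto_projection {P : Set E} (hP : Convex ℝ P) {Ψ : E → E}
    (hmem : ∀ r, Ψ r ∈ P) (hproj : ∀ r, ∀ z ∈ P, ‖Ψ r - r‖ ≤ ‖z - r‖) {a g v w : E}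
    (hw : w ∈ P)
    (hv : Tendsto (fun δ : ℝ => δ⁻¹ • (Ψ (a + δ • g) - a)) (𝓝[>] 0) (𝓝 v)) :
    inner ℝ (a - w) v ≤ inner ℝ (a - w) g := by
  -- With `u` the difference quotient, the projected point is `a + δ • u`.
  have hδ : Tendsto (fun δ : ℝ => δ) (𝓝[>] 0) (𝓝 0) := tendsto_nhdsWithin_of_tendsto_nhds tendsto_id
  have hl := (hv.const_sub g).inner ((hδ.smul hv).const_sub (w - a)) (𝕜 := ℝ)
  have := le_of_tendsto hl (b := 0) (by
    filter_upwards [self_mem_nhdsWithin] with δ (hpos : 0 < δ)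
    have h := inner_le_zero_of_nearest hP (hmem (a + δ • g)) hw (hproj (a + δ • g))
    set p := Ψ (a + δ • g)
    have e1 : a + δ • g - p = δ • (g - δ⁻¹ • (p - a)) := by
      rw [smul_sub, smul_inv_smul₀ hpos.ne']; abel
    have e2 : w - p = w - a - δ • δ⁻¹ • (p - a) := by
      rw [smul_inv_smul₀ hpos.ne']; abel
    rw [e1, e2, real_inner_smul_left] at h
    exact nonpos_of_mul_nonpos_right h hpos)
  rw [zero_smul, sub_zero, ← neg_sub a w, inner_neg_right, inner_sub_left,
    real_inner_comm, real_inner_comm (a - w) v] at this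
  linarith

/-- Exponential decay from the differential inequality `V' ≤ -k * V`. -/
lemma le_mul_exp_of_deriv_le {V V' : ℝ → ℝ} {k : ℝ}
    (hV : ∀ t, 0 ≤ t → HasDerivAt V (V' t) t) (hle : ∀ t, 0 ≤ t → V' t ≤ -k * V t) {t : ℝ}
    (ht : 0 ≤ t) : V t ≤ V 0 * Real.exp (-k * t) := by
  have hW : ∀ s, 0 ≤ s → HasDerivAt (fun s => V s * Real.exp (k * s))
      ((V' s + k * V s) * Real.exp (k * s)) s := fun s hs => by
    have h := (hV s hs).mul (((hasDerivAt_id s).const_mul k).exp)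
    refine h.congr_deriv ?_
    simp only [id]
    ring
  have hanti : AntitoneOn (fun s => V s * Real.exp (k * s)) (Ici 0) := by
    refine antitoneOn_of_hasDerivWithinAt_nonpos (convex_Ici 0)
      (fun s hs => (hW s hs).continuousAt.continuousWithinAt)
      (fun s hs => (hW s (interior_subset hs)).hasDerivWithinAt) fun s hs => ?_
    exact mul_nonpos_of_nonpos_of_nonneg (by linarith [hle s (interior_subset hs)])
      (Real.exp_pos _).le
  have h : V t * Real.exp (k * t) ≤ V 0 * Real.exp (k * 0) :=
    hanti (mem_Ici.2 le_rfl) (mem_Ici.2 ht) ht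
  rw [mul_zero, Real.exp_zero, mul_one] at h
  rwa [neg_mul, Real.exp_neg, ← div_eq_mul_inv, le_div_iff₀ (Real.exp_pos _)]

end Helpers

/-- For nonempty closed convex `X, Y`, a differentiable `S` that is
`μ`-strongly convex in `x` and `q`-strongly concave in `y`, and a saddle point
`(xs, ys)` of `S` on `X × Y`, any trajectory of the projected saddle flow dynamics
(whose derivatives are given by the vector field projections) converges exponentially
to `(xs, ys)` with rate `c = min μ q`. -/
theorem projected_saddle_flow_exponential_convergence {n m : ℕ}
    (X : Set (EuclideanSpace ℝ (Fin n))) (Y : Set (EuclideanSpace ℝ (Fin m)))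
    (hXne : X.Nonempty) (hXcl : IsClosed X) (hXconv : Convex ℝ X)
    (hYne : Y.Nonempty) (hYcl : IsClosed Y) (hYconv : Convex ℝ Y)
    (S : EuclideanSpace ℝ (Fin n) → EuclideanSpace ℝ (Fin m) → ℝ)
    (μ q : ℝ) (hμ : 0 < μ) (hq : 0 < q)
    (hdiff : Differentiable ℝ
      (fun p : EuclideanSpace ℝ (Fin n) × EuclideanSpace ℝ (Fin m) => S p.1 p.2))
    (hsc : ∀ y, ConvexOn ℝ univ (fun x => S x y - μ / 2 * ‖x‖ ^ 2))
    (hscc : ∀ x, ConvexOn ℝ univ (fun y => -S x y - q / 2 * ‖y‖ ^ 2))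
    (xs : EuclideanSpace ℝ (Fin n)) (ys : EuclideanSpace ℝ (Fin m))
    (hxs : xs ∈ X) (hys : ys ∈ Y)
    (hsaddle : ∀ x ∈ X, ∀ y ∈ Y, S xs y ≤ S xs ys ∧ S xs ys ≤ S x ys)
    (ΨX : EuclideanSpace ℝ (Fin n) → EuclideanSpace ℝ (Fin n))
    (hΨXmem : ∀ r, ΨX r ∈ X) (hΨXproj : ∀ r, ∀ q' ∈ X, ‖ΨX r - r‖ ≤ ‖q' - r‖)
    (ΨY : EuclideanSpace ℝ (Fin m) → EuclideanSpace ℝ (Fin m))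
    (hΨYmem : ∀ r, ΨY r ∈ Y) (hΨYproj : ∀ r, ∀ q' ∈ Y, ‖ΨY r - r‖ ≤ ‖q' - r‖)
    (x : ℝ → EuclideanSpace ℝ (Fin n)) (y : ℝ → EuclideanSpace ℝ (Fin m))
    (vx : ℝ → EuclideanSpace ℝ (Fin n)) (vy : ℝ → EuclideanSpace ℝ (Fin m))
    (hmem : ∀ t, 0 ≤ t → x t ∈ X ∧ y t ∈ Y)
    (hx : ∀ t, 0 ≤ t → HasDerivAt x (vx t) t)
    (hy : ∀ t, 0 ≤ t → HasDerivAt y (vy t) t)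
    (hvx : ∀ t, 0 ≤ t → Tendsto (fun δ : ℝ =>
        δ⁻¹ • (ΨX (x t + δ • (-(gradient (fun x' => S x' (y t)) (x t)))) - x t))
      (𝓝[>] 0) (𝓝 (vx t)))
    (hvy : ∀ t, 0 ≤ t → Tendsto (fun δ : ℝ =>
        δ⁻¹ • (ΨY (y t + δ • gradient (fun y' => S (x t) y') (y t)) - y t))
      (𝓝[>] 0) (𝓝 (vy t))) :
    ∀ t, 0 ≤ t →
      Real.sqrt (‖x t - xs‖ ^ 2 + ‖y t - ys‖ ^ 2) ≤
        Real.sqrt (‖x 0 - xs‖ ^ 2 + ‖y 0 - ys‖ ^ 2) * Real.exp (-(min μ q) * t) := by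
  have key : ∀ t, 0 ≤ t →
      2 * inner ℝ (x t - xs) (vx t) + 2 * inner ℝ (y t - ys) (vy t) ≤
        -(2 * min μ q) * (‖x t - xs‖ ^ 2 + ‖y t - ys‖ ^ 2) := by
    intro t ht
    obtain ⟨hxm, hym⟩ := hmem t ht
    have dx : DifferentiableAt ℝ (fun x' => S x' (y t)) (x t) :=
      DifferentiableAt.fun_comp' (f := fun x' => (x', y t)) (x t) (hdiff (x t, y t))
        (differentiableAt_id.prodMk (differentiableAt_const (y t)))
    have dy : DifferentiableAt ℝ (fun y' => S (x t) y') (y t) :=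
      DifferentiableAt.fun_comp' (f := fun y' => (x t, y')) (y t) (hdiff (x t, y t))
        ((differentiableAt_const (x t)).prodMk differentiableAt_id)
    have px := inner_le_of_tendsto_projection hXconv hΨXmem hΨXproj hxs (hvx t ht)
    have py := inner_le_of_tendsto_projection hYconv hΨYmem hΨYproj hys (hvy t ht)
    have gx := strongConvex_gradient_le (hsc (y t)) xs dx
    have gy := strongConvex_gradient_le (hscc (x t)) ys dy.fun_neg
    have eg : gradient (fun y' => -S (x t) y') (y t) = -gradient (fun y' => S (x t) y') (y t) := by
      simp only [gradient, fderiv_fun_neg, map_neg]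
    have qx := strongConvex_growth_of_isMin (hsc ys) hXconv hxs hxm
      fun z hz => (hsaddle z hz ys hys).2
    have qy := strongConvex_growth_of_isMin (hscc xs) hYconv hys hym
      fun z hz => neg_le_neg (hsaddle xs hxs z hz).1
    rw [eg, inner_neg_left, ← neg_sub (y t) ys, inner_neg_right, norm_neg, real_inner_comm] at gy
    rw [← neg_sub (x t) xs, inner_neg_right, norm_neg, real_inner_comm] at gx
    rw [inner_neg_right] at px
    have m1 := mul_le_mul_of_nonneg_right (min_le_left μ q) (sq_nonneg ‖x t - xs‖)
    have m2 := mul_le_mul_of_nonneg_right (min_le_right μ q) (sq_nonneg ‖y t - ys‖)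
    linarith
  intro t ht
  have hV := le_mul_exp_of_deriv_le
    (fun s hs => (((hx s hs).sub_const xs).norm_sq).add (((hy s hs).sub_const ys).norm_sq)) key ht
  -- The decay rate of `V` is halved by the square root.
  have e : Real.exp (-(2 * min μ q) * t) = Real.exp (-(min μ q) * t) ^ 2 := by
    rw [← Real.exp_nat_mul]; congr 1; push_cast; ring
  refine (Real.sqrt_le_sqrt hV).trans_eq ?_
  rw [e, Real.sqrt_mul' _ (sq_nonneg _), Real.sqrt_sq (Real.exp_pos _).le]
  rfl
end
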